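/- arXiv:1611.03567 — 4 statements merged into one kernel-verified Lean document; each statement's English description precedes it below -/
import Mathlib

section
/- (Pointwise convergence rate of the relaxed PR splitting method.) Let 𝒳 be a finite-dimensional real inner product space, β ≥ 0, A, B : 𝒳 ⇉ 𝒳 maximal β-strongly monotone with (A+B)⁻¹(0) ≠ ∅, γ > 0, θ₀ := 1 + γβ/2, θ̃ := min{θ, θ₀}, and assume θ ∈ (0, 2θ₀). Let {(u_k, v_k, x_k)} be generated by the relaxed PR splitting method from x₀, and set a_k := (x_{k−1} − u_k)/γ, b_k := (2u_k − v_k − x_{k−1})/γ. Then for every k ≥ 1 and every z* = (u*, u*, x*) ∈ (ℒ_{θ̃} + γC)⁻¹(0): a_k + b_k ∈ A(u_k) + B(v_k), and γ‖a_k + b_k‖ = ‖u_k − v_k‖ ≤ √2 ‖x₀ − x*‖ / (√k · √(2θ̃ − θ)). -/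
open RealInnerProductSpace Filter Pointwise

/-- The inner product on the triple product space `𝒵 = 𝒳 × 𝒳 × 𝒳`. -/
noncomputable def inner3 {X : Type*} [NormedAddCommGroup X] [InnerProductSpace ℝ X]
    (z z' : X × X × X) : ℝ :=
  ⟪z.1, z'.1⟫ + ⟪z.2.1, z'.2.1⟫ + ⟪z.2.2, z'.2.2⟫

/-- The linear map `ℒ_θ̃(u,v,x) := ((1−θ̃)u + θ̃v − x, (θ̃−2)u + (1−θ̃)v + x, u − v)`. -/
def Lmap {X : Type*} [NormedAddCommGroup X] [InnerProductSpace ℝ X]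
    (θ : ℝ) (z : X × X × X) : X × X × X :=
  ((1 - θ) • z.1 + θ • z.2.1 - z.2.2,
    (θ - 2) • z.1 + (1 - θ) • z.2.1 + z.2.2,
    z.1 - z.2.1)

/-- The operator `(ℒ_θ̃ + γC)(u,v,x)` where `C(u,v,x) := A(u) × B(v) × {0}`. -/
def LC {X : Type*} [NormedAddCommGroup X] [InnerProductSpace ℝ X]
    (θ γ : ℝ) (A B : X → Set X) (z : X × X × X) : Set (X × X × X) :=
  {rr | ∃ a ∈ A z.1, ∃ b ∈ B z.2.1, rr = Lmap θ z + γ • ((a, b, (0 : X)) : X × X × X)}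

/-- `T : 𝒳 ⇉ 𝒳` is β-strongly monotone (β = 0 meaning just monotone). -/
def StrMono {X : Type*} [NormedAddCommGroup X] [InnerProductSpace ℝ X]
    (β : ℝ) (T : X → Set X) : Prop :=
  ∀ x x' w w' : X, w ∈ T x → w' ∈ T x' → β * ‖x - x'‖ ^ 2 ≤ ⟪w - w', x - x'⟫

/-- `T : 𝒳 ⇉ 𝒳` is maximal β-strongly monotone: it is β-strongly monotone and its graph
is not properly contained in the graph of another monotone operator. -/
def MaxStrMono {X : Type*} [NormedAddCommGroup X] [InnerProductSpace ℝ X]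
    (β : ℝ) (T : X → Set X) : Prop :=
  StrMono β T ∧ ∀ T' : X → Set X, StrMono 0 T' → (∀ x, T x ⊆ T' x) → T' = T

/-- Monotonicity of an operator on the triple product space `𝒵 = 𝒳³`. -/
def Mono3 {X : Type*} [NormedAddCommGroup X] [InnerProductSpace ℝ X]
    (T : (X × X × X) → Set (X × X × X)) : Prop :=
  ∀ z z' t t', t ∈ T z → t' ∈ T z' → 0 ≤ inner3 (z - z') (t - t')

/-- Maximal monotonicity of an operator on the triple product space `𝒵 = 𝒳³`. -/
def MaxMono3 {X : Type*} [NormedAddCommGroup X] [InnerProductSpace ℝ X]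
    (T : (X × X × X) → Set (X × X × X)) : Prop :=
  Mono3 T ∧ ∀ T', Mono3 T' → (∀ z, T z ⊆ T' z) → T' = T

/-- The ε-enlargement `T^[ε]` of an operator on `𝒳`. -/
def epsEnlX {X : Type*} [NormedAddCommGroup X] [InnerProductSpace ℝ X]
    (T : X → Set X) (ε : ℝ) (z : X) : Set X :=
  {t | ∀ z' t' : X, t' ∈ T z' → -ε ≤ ⟪t - t', z - z'⟫}

/-- The relaxed Peaceman–Rachford splitting method with relaxation parameter `θ` and
scaling `γ`: for `k ≥ 1`, `u_k = J_{γA}(x_{k−1})`, `v_k = J_{γB}(2u_k − x_{k−1})`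
(expressed through resolvent inclusions) and `x_k = x_{k−1} + θ(v_k − u_k)`. -/
structure RPR {X : Type*} [NormedAddCommGroup X] [InnerProductSpace ℝ X]
    (A B : X → Set X) (γ θ : ℝ) (x u v : ℕ → X) : Prop where
  resA : ∀ k, 1 ≤ k → x (k - 1) - u k ∈ γ • A (u k)
  resB : ∀ k, 1 ≤ k → (2 : ℝ) • u k - x (k - 1) - v k ∈ γ • B (v k)
  step : ∀ k, 1 ≤ k → x k = x (k - 1) + θ • (v k - u k)

theorem pr_key {X : Type*} [NormedAddCommGroup X] [InnerProductSpace ℝ X]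
    (β : ℝ) (hβ : 0 ≤ β) (A B : X → Set X) (hA : StrMono β A) (hB : StrMono β B)
    (γ θ : ℝ) (hγ : 0 < γ) (hθ : 0 < θ) (x u v x' u' v' : X)
    (h1 : x - u ∈ γ • A u) (h2 : (2 : ℝ) • u - x - v ∈ γ • B v)
    (h1' : x' - u' ∈ γ • A u') (h2' : (2 : ℝ) • u' - x' - v' ∈ γ • B v') :
    ‖(x + θ • (v - u)) - (x' + θ • (v' - u'))‖ ^ 2
      + θ * (2 * (1 + γ * β / 2) - θ) * ‖(u - v) - (u' - v')‖ ^ 2 ≤ ‖x - x'‖ ^ 2 := by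
  obtain ⟨a, ha, e1⟩ := h1
  obtain ⟨b, hb, e2⟩ := h2
  obtain ⟨a', ha', e1'⟩ := h1'
  obtain ⟨b', hb', e2'⟩ := h2'
  have m1 := mul_le_mul_of_nonneg_left (hA u u' a a' ha ha') hγ.le
  have m2 := mul_le_mul_of_nonneg_left (hB v v' b b' hb hb') hγ.le
  rw [← real_inner_smul_left, smul_sub] at m1 m2
  simp only at e1 e2 e1' e2'
  rw [e1, e1'] at m1
  rw [e2, e2'] at m2
  obtain ⟨p, hp⟩ : ∃ p, p = x - x' := ⟨_, rfl⟩
  obtain ⟨q, hq⟩ : ∃ q, q = u - u' := ⟨_, rfl⟩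
  obtain ⟨r, hr⟩ : ∃ r, r = v - v' := ⟨_, rfl⟩
  have f1 : x - u - (x' - u') = p - q := by rw [hp, hq]; abel
  have f2 : (2 : ℝ) • u - x - v - ((2 : ℝ) • u' - x' - v') = (2 : ℝ) • q - p - r := by
    rw [hp, hq, hr]; module
  have f3 : (x + θ • (v - u)) - (x' + θ • (v' - u')) = p - θ • (q - r) := by
    rw [hp, hq, hr]; module
  have f4 : (u - v) - (u' - v') = q - r := by rw [hq, hr]; abel
  rw [f1, ← hq] at m1
  rw [f2, ← hr] at m2
  rw [f3, f4, ← hp]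
  have hs : 0 ≤ ‖q + r‖ ^ 2 := sq_nonneg _
  have hs' := mul_nonneg (mul_nonneg hγ.le hβ) hs
  have key : (1 + γ * β / 2) * ‖q - r‖ ^ 2 ≤ ⟪p, q - r⟫ := by
    simp only [← real_inner_self_eq_norm_sq, inner_sub_left, inner_sub_right, inner_add_left,
      inner_add_right, real_inner_smul_left, real_inner_comm q r] at *
    linarith
  rw [norm_sub_sq_real p, real_inner_smul_right, norm_smul, mul_pow, Real.norm_eq_abs, sq_abs]
  nlinarith [mul_le_mul_of_nonneg_left key hθ.le]

/-- Pointwise convergence rate of the relaxed PR splitting method for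
`θ ∈ (0, 2θ₀)`. -/
theorem stmt16 {X : Type*} [NormedAddCommGroup X] [InnerProductSpace ℝ X]
    [FiniteDimensional ℝ X]
    (β : ℝ) (hβ : 0 ≤ β) (A B : X → Set X)
    (hA : MaxStrMono β A) (hB : MaxStrMono β B)
    (hsol : ∃ u : X, ∃ a ∈ A u, ∃ b ∈ B u, a + b = 0)
    (γ θ θ0 θt : ℝ) (hγ : 0 < γ) (hθ0 : θ0 = 1 + γ * β / 2) (hθt : θt = min θ θ0)
    (hθpos : 0 < θ) (hθlt : θ < 2 * θ0)
    (x u v : ℕ → X) (hpr : RPR A B γ θ x u v)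
    (a b : ℕ → X)
    (ha : ∀ k, a k = γ⁻¹ • (x (k - 1) - u k))
    (hb : ∀ k, b k = γ⁻¹ • ((2 : ℝ) • u k - v k - x (k - 1))) :
    ∀ k, 1 ≤ k → ∀ ustar xstar : X,
      (0 : X × X × X) ∈ LC θt γ A B (ustar, ustar, xstar) →
        a k + b k ∈ A (u k) + B (v k)
        ∧ γ * ‖a k + b k‖ = ‖u k - v k‖
        ∧ ‖u k - v k‖
            ≤ Real.sqrt 2 * ‖x 0 - xstar‖ / (Real.sqrt k * Real.sqrt (2 * θt - θ)) := by
  obtain ⟨hA, -⟩ := hA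
  obtain ⟨hB, -⟩ := hB
  intro k hk us xs hz
  have hγ' : γ ≠ 0 := hγ.ne'
  have hab : a k + b k = γ⁻¹ • (u k - v k) := by
    rw [ha, hb]; module
  refine ⟨?_, ?_, ?_⟩
  · obtain ⟨a1, h1, e1⟩ := hpr.resA k hk
    obtain ⟨b1, h2, e2⟩ := hpr.resB k hk
    simp only at e1 e2
    refine Set.add_mem_add ?_ ?_
    · rw [ha, ← e1, inv_smul_smul₀ hγ']; exact h1
    · rw [hb, sub_right_comm, ← e2, inv_smul_smul₀ hγ']; exact h2
  · rw [hab, norm_smul, Real.norm_eq_abs, abs_of_pos (inv_pos.mpr hγ),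
      mul_inv_cancel_left₀ hγ']
  · obtain ⟨a1, h1, b1, h2, e⟩ := hz
    simp only [Lmap, Prod.ext_iff, Prod.fst_add, Prod.snd_add, Prod.smul_fst, Prod.smul_snd,
      Prod.fst_zero, Prod.snd_zero] at e h1 h2
    obtain ⟨e1, e2, -⟩ := e
    have s1 : xs - us ∈ γ • A us := by
      refine ⟨a1, h1, ?_⟩
      simp only
      rw [← sub_eq_zero, e1]; module
    have s2 : (2 : ℝ) • us - xs - us ∈ γ • B us := by
      refine ⟨b1, h2, ?_⟩
      simp only
      rw [← sub_eq_zero, e2]; module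
    obtain ⟨c, hc⟩ : ∃ c, c = θ * (2 * (1 + γ * β / 2) - θ) := ⟨_, rfl⟩
    have hcpos : 0 < c := by
      rw [hc]; apply mul_pos hθpos; rw [← hθ0]; linarith
    have st : ∀ n, x (n + 1) = x n + θ • (v (n + 1) - u (n + 1)) := fun n => hpr.step (n + 1) (by omega)
    have rA : ∀ n, x n - u (n + 1) ∈ γ • A (u (n + 1)) := fun n => hpr.resA (n + 1) (by omega)
    have rB : ∀ n, (2 : ℝ) • u (n + 1) - x n - v (n + 1) ∈ γ • B (v (n + 1)) :=
      fun n => hpr.resB (n + 1) (by omega)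
    have fej : ∀ n, ‖x (n + 1) - xs‖ ^ 2 + c * ‖u (n + 1) - v (n + 1)‖ ^ 2 ≤ ‖x n - xs‖ ^ 2 := by
      intro n
      have := pr_key β hβ A B hA hB γ θ hγ hθpos _ _ _ _ _ _ (rA n) (rB n) s1 s2
      rw [← st, ← hc] at this
      simpa using this
    have mon : ∀ n, ‖u (n + 2) - v (n + 2)‖ ^ 2 ≤ ‖u (n + 1) - v (n + 1)‖ ^ 2 := by
      intro n
      have := pr_key β hβ A B hA hB γ θ hγ hθpos _ _ _ _ _ _ (rA (n + 1)) (rB (n + 1)) (rA n) (rB n)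
      rw [← st, ← st, ← hc] at this
      have d : ∀ m, ‖x (m + 1) - x m‖ ^ 2 = θ ^ 2 * ‖u (m + 1) - v (m + 1)‖ ^ 2 := by
        intro m
        rw [st, add_sub_cancel_left, norm_smul, mul_pow, Real.norm_eq_abs, sq_abs, norm_sub_rev]
      rw [d, d] at this
      have h0 := mul_nonneg hcpos.le
        (sq_nonneg ‖u (n + 1 + 1) - v (n + 1 + 1) - (u (n + 1) - v (n + 1))‖)
      exact le_of_mul_le_mul_left (by linarith) (pow_pos hθpos 2)
    have main : ∀ n : ℕ, (n + 1 : ℝ) * c * ‖u (n + 1) - v (n + 1)‖ ^ 2 + ‖x (n + 1) - xs‖ ^ 2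
        ≤ ‖x 0 - xs‖ ^ 2 := by
      intro n
      induction n with
      | zero => have := fej 0; simp only [Nat.cast_zero, zero_add] at *; linarith
      | succ n ih =>
        have h1 := fej (n + 1)
        have h2 := mul_le_mul_of_nonneg_left (mon n) (by positivity : 0 ≤ (n + 1 : ℝ) * c)
        push_cast
        linarith
    obtain ⟨n, rfl⟩ : ∃ n, k = n + 1 := ⟨k - 1, by omega⟩
    have hm := main n
    have hθ01 : 1 ≤ θ0 := by rw [hθ0]; nlinarith [mul_nonneg hγ.le hβ]
    have hτ : 0 < 2 * θt - θ ∧ 2 * θt - θ ≤ 2 * c := by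
      rw [hc, ← hθ0, hθt]
      rcases le_total θ θ0 with h | h
      · rw [min_eq_left h]
        constructor
        · linarith
        · nlinarith
      · rw [min_eq_right h]
        constructor
        · linarith
        · nlinarith
    obtain ⟨hτ1, hτ2⟩ := hτ
    have hk0 : (0 : ℝ) < ((n + 1 : ℕ) : ℝ) := by positivity
    rw [le_div_iff₀ (by positivity)]
    refine (sq_le_sq₀ (by positivity) (by positivity)).mp ?_
    rw [mul_pow, mul_pow, mul_pow, Real.sq_sqrt hk0.le, Real.sq_sqrt hτ1.le,
      Real.sq_sqrt (by norm_num)]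
    have h3 := mul_le_mul_of_nonneg_left hτ2
      (by positivity : 0 ≤ (n + 1 : ℝ) * ‖u (n + 1) - v (n + 1)‖ ^ 2)
    push_cast
    nlinarith [sq_nonneg ‖x (n + 1) - xs‖]
end

section
/- (Transportation formula for strongly monotone operators.) Let 𝒳 be a finite-dimensional real inner product space, β ≥ 0, and T : 𝒳 ⇉ 𝒳 a maximal β-strongly monotone operator. Suppose t_i ∈ T(u_i) for i = 1, …, k, and define t̄_k := (1/k)Σ_{i=1}^{k} t_i, ū_k := (1/k)Σ_{i=1}^{k} u_i, and ε_k := (1/k)Σ_{i=1}^{k} ⟨t_i − βu_i, u_i − ū_k⟩. Then ε_k ≥ 0 and t̄_k ∈ T^[ε_k](ū_k). -/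
open RealInnerProductSpace Filter Pointwise

/-- Transportation formula for maximal β-strongly monotone operators. -/
theorem stmt17 {X : Type*} [NormedAddCommGroup X] [InnerProductSpace ℝ X]
    [FiniteDimensional ℝ X]
    (β : ℝ) (hβ : 0 ≤ β) (T : X → Set X) (hT : MaxStrMono β T)
    (k : ℕ) (hk : 1 ≤ k) (t u : ℕ → X)
    (ht : ∀ i, 1 ≤ i → i ≤ k → t i ∈ T (u i))
    (tb ub : X) (εk : ℝ)
    (htb : tb = (k : ℝ)⁻¹ • ∑ i ∈ Finset.Icc 1 k, t i)
    (hub : ub = (k : ℝ)⁻¹ • ∑ i ∈ Finset.Icc 1 k, u i)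
    (hεk : εk = (k : ℝ)⁻¹ * ∑ i ∈ Finset.Icc 1 k, ⟪t i - β • u i, u i - ub⟫) :
    0 ≤ εk ∧ tb ∈ epsEnlX T εk ub := by
  have hk0 : (0 : ℝ) < k := by exact_mod_cast hk
  set S := Finset.Icc 1 k with hS
  have hcard : (S.card : ℝ) = k := by simp [hS]
  have hsu : ∑ i ∈ S, u i = (k : ℝ) • ub := by
    rw [hub, smul_smul, mul_inv_cancel₀ hk0.ne', one_smul]
  have hst : ∑ i ∈ S, t i = (k : ℝ) • tb := by
    rw [htb, smul_smul, mul_inv_cancel₀ hk0.ne', one_smul]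
  have hε : ∑ i ∈ S, ⟪t i - β • u i, u i - ub⟫ = k * εk := by
    rw [hεk, ← mul_assoc, mul_inv_cancel₀ hk0.ne', one_mul]
  have hss : ∑ i ∈ S, (t i - β • u i) = (k : ℝ) • (tb - β • ub) := by
    rw [Finset.sum_sub_distrib, ← Finset.smul_sum, hsu, hst, smul_sub, smul_comm]
  have key : ∀ z s : X, ∑ i ∈ S, ⟪(t i - β • u i) - s, u i - z⟫
      = k * (εk + ⟪(tb - β • ub) - s, ub - z⟫) := by
    intro z s
    have h1 : ∀ i ∈ S, ⟪(t i - β • u i) - s, u i - z⟫ =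
        ⟪t i - β • u i, u i - ub⟫ + ⟪t i - β • u i, ub - z⟫ - ⟪s, u i⟫ + ⟪s, z⟫ := by
      intro i _
      simp only [inner_sub_left, inner_sub_right]
      ring
    rw [Finset.sum_congr rfl h1, Finset.sum_add_distrib, Finset.sum_sub_distrib,
      Finset.sum_add_distrib, hε, ← sum_inner, hss, ← inner_sum, hsu, Finset.sum_const,
      nsmul_eq_mul, hcard, inner_smul_left, inner_smul_right, inner_sub_left _ s,
      inner_sub_right s]
    simp only [conj_trivial]
    ring
  have mono : ∀ x x' w w' : X, w ∈ T x → w' ∈ T x' →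
      0 ≤ ⟪(w - β • x) - (w' - β • x'), x - x'⟫ := by
    intro x x' w w' hw hw'
    have h := hT.1 x x' w w' hw hw'
    have e : (w - β • x) - (w' - β • x') = (w - w') - β • (x - x') := by
      rw [smul_sub]; abel
    rw [e, inner_sub_left, real_inner_smul_left, real_inner_self_eq_norm_sq]
    linarith
  have tr : ∀ z' t' : X, t' ∈ T z' →
      0 ≤ εk + ⟪(tb - β • ub) - (t' - β • z'), ub - z'⟫ := by
    intro z' t' h'
    have h : 0 ≤ ∑ i ∈ S, ⟪(t i - β • u i) - (t' - β • z'), u i - z'⟫ := by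
      refine Finset.sum_nonneg fun i hi => ?_
      rw [hS, Finset.mem_Icc] at hi
      exact mono _ _ _ _ (ht i hi.1 hi.2) h'
    rw [key] at h
    exact nonneg_of_mul_nonneg_right h hk0
  constructor
  · have h : 0 ≤ ∑ j ∈ S, (εk + ⟪(tb - β • ub) - (t j - β • u j), ub - u j⟫) := by
      refine Finset.sum_nonneg fun i hi => ?_
      rw [hS, Finset.mem_Icc] at hi
      exact tr _ _ (ht i hi.1 hi.2)
    have e : ∀ j ∈ S, ⟪(tb - β • ub) - (t j - β • u j), ub - u j⟫
        = ⟪(t j - β • u j) - (tb - β • ub), u j - ub⟫ := by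
      intro j _
      rw [← inner_neg_neg, neg_sub, neg_sub]
    rw [Finset.sum_add_distrib, Finset.sum_congr rfl e, key, Finset.sum_const,
      nsmul_eq_mul, hcard, sub_self, sub_self, inner_zero_left] at h
    have h2 : 0 ≤ (k : ℝ) * εk := by linarith
    exact nonneg_of_mul_nonneg_right h2 hk0
  · intro z' t' h'
    have h := tr z' t' h'
    have e : (tb - β • ub) - (t' - β • z') = (tb - t') - β • (ub - z') := by
      rw [smul_sub]; abel
    rw [e, inner_sub_left, real_inner_smul_left, real_inner_self_eq_norm_sq] at h
    have : 0 ≤ β * ‖ub - z'‖ ^ 2 := by positivity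
    linarith
end

section
/- (Ergodic convergence rate of the relaxed PR splitting method.) Let 𝒳 be a finite-dimensional real inner product space, β ≥ 0, A, B : 𝒳 ⇉ 𝒳 maximal β-strongly monotone with (A+B)⁻¹(0) ≠ ∅, γ > 0, θ₀ := 1 + γβ/2, θ̃ := min{θ, θ₀}, and assume θ ∈ (0, 2θ₀]. Let {(u_k, v_k, x_k)} be generated by the relaxed PR splitting method from x₀, set a_k := (x_{k−1} − u_k)/γ, b_k := (2u_k − v_k − x_{k−1})/γ, and define the ergodic means ū_k := (1/k)Σ_{i=1}^{k} u_i, v̄_k := (1/k)Σ_{i=1}^{k} v_i, ā_k := (1/k)Σ_{i=1}^{k} a_i, b̄_k := (1/k)Σ_{i=1}^{k} b_i, ε′_k := (1/k)Σ_{i=1}^{k} ⟨a_i − βu_i, u_i − ū_k⟩, ε″_k := (1/k)Σ_{i=1}^{k} ⟨b_i − βv_i, v_i − v̄_k⟩. Then for every k ≥ 1 and every z* = (u*, u*, x*) ∈ (ℒ_{θ̃} + γC)⁻¹(0): ā_k ∈ A^[ε′_k](ū_k), b̄_k ∈ B^[ε″_k](v̄_k), γ‖ā_k + b̄_k‖ =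 ‖ū_k − v̄_k‖ ≤ 2‖x₀ − x*‖/(kθ), and ε′_k + ε″_k ≤ 3(1 + 2(1 − θ̃/θ)²)‖x₀ − x*‖²/(kγθ). -/
open RealInnerProductSpace Filter Pointwise

theorem enl_aux {X : Type*} [NormedAddCommGroup X] [InnerProductSpace ℝ X]
    (β : ℝ) (hβ : 0 ≤ β) (A : X → Set X) (hA : StrMono β A) (k : ℕ) (hk : 1 ≤ k)
    (a u : ℕ → X) (hau : ∀ i, 1 ≤ i → a i ∈ A (u i)) (ub ab : X) (ε : ℝ)
    (hub : ub = (k : ℝ)⁻¹ • ∑ i ∈ Finset.Icc 1 k, u i)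
    (hab : ab = (k : ℝ)⁻¹ • ∑ i ∈ Finset.Icc 1 k, a i)
    (hε : ε = (k : ℝ)⁻¹ * ∑ i ∈ Finset.Icc 1 k, ⟪a i - β • u i, u i - ub⟫) :
    ab ∈ epsEnlX A ε ub := by
  intro z t ht
  have hk0 : (0 : ℝ) < k := by exact_mod_cast hk
  have hu : ∑ i ∈ Finset.Icc 1 k, u i = (k : ℝ) • ub := by
    rw [hub, smul_inv_smul₀ hk0.ne']
  have ha : ∑ i ∈ Finset.Icc 1 k, a i = (k : ℝ) • ab := by
    rw [hab, smul_inv_smul₀ hk0.ne']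
  have hE : ∑ i ∈ Finset.Icc 1 k, ⟪a i - β • u i, u i - ub⟫ = k * ε := by
    rw [hε]; field_simp
  have key : ∀ i ∈ Finset.Icc 1 k, 0 ≤ ⟪a i - β • u i, u i - ub⟫
      + (⟪a i - β • u i, ub - z⟫ - ⟪t - β • z, u i - z⟫) := by
    intro i hi
    have h := hA _ _ _ _ (hau i (Finset.mem_Icc.1 hi).1) ht
    rw [← real_inner_self_eq_norm_sq] at h
    simp only [inner_sub_left, inner_sub_right, real_inner_smul_left] at h ⊢
    rw [real_inner_comm (u i) z] at h ⊢
    linarith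
  have hs := Finset.sum_nonneg key
  rw [Finset.sum_add_distrib, Finset.sum_sub_distrib, hE, ← sum_inner, ← inner_sum,
    Finset.sum_sub_distrib, Finset.sum_sub_distrib, ← Finset.smul_sum, hu, ha] at hs
  simp only [Finset.sum_const, Nat.card_Icc, Nat.add_sub_cancel] at hs
  rw [← Nat.cast_smul_eq_nsmul ℝ] at hs
  have h2 : 0 ≤ (k : ℝ) * (ε + (⟪ab - β • ub, ub - z⟫ - ⟪t - β • z, ub - z⟫)) := by
    rw [smul_comm β, ← smul_sub, ← smul_sub, real_inner_smul_left, real_inner_smul_right] at hs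
    linarith
  have h3 := nonneg_of_mul_nonneg_right h2 hk0
  have h4 : 0 ≤ β * ⟪ub - z, ub - z⟫ := mul_nonneg hβ real_inner_self_nonneg
  simp only [inner_sub_left, inner_sub_right, real_inner_smul_left] at h3 h4 ⊢
  linarith

theorem fejer_aux {X : Type*} [NormedAddCommGroup X] [InnerProductSpace ℝ X]
    (s θ : ℝ) (hs : 0 ≤ s) (hθ : 0 < θ) (hle : θ ≤ 2 * (1 + s / 2)) (x u v : X)
    (hA : s * ‖u‖ ^ 2 ≤ ⟪x - u, u⟫) (hB : s * ‖v‖ ^ 2 ≤ ⟪(2 : ℝ) • u - v - x, v⟫) :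
    ‖x + θ • (v - u)‖ ^ 2 ≤ ‖x‖ ^ 2 := by
  have h1 : 0 ≤ s * ⟪u + v, u + v⟫ := mul_nonneg hs real_inner_self_nonneg
  have h2 : 0 ≤ (2 * (1 + s / 2) - θ) * ⟪u - v, u - v⟫ :=
    mul_nonneg (by linarith) real_inner_self_nonneg
  have h3 : ‖x + θ • (v - u)‖ ^ 2 = ‖x‖ ^ 2 - 2 * θ * ⟪x, u - v⟫
      + θ ^ 2 * ⟪u - v, u - v⟫ := by
    rw [← real_inner_self_eq_norm_sq, ← real_inner_self_eq_norm_sq]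
    simp only [inner_sub_left, inner_sub_right, inner_add_left, inner_add_right,
      real_inner_smul_left, real_inner_smul_right]
    rw [real_inner_comm u x, real_inner_comm v x, real_inner_comm v u]
    ring
  have h4 : θ * ⟪u - v, u - v⟫ ≤ 2 * ⟪x, u - v⟫ := by
    rw [← real_inner_self_eq_norm_sq] at hA hB
    simp only [inner_sub_left, inner_sub_right, inner_add_left, inner_add_right,
      real_inner_smul_left, real_inner_smul_right] at *
    rw [real_inner_comm v u] at *
    linarith
  rw [h3]
  have := mul_le_mul_of_nonneg_left h4 hθ.le
  linarith

theorem step_aux {X : Type*} [NormedAddCommGroup X] [InnerProductSpace ℝ X]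
    (s θ : ℝ) (hs : 0 ≤ s) (hθ : 0 < θ) (hle : θ ≤ 2 * (1 + s / 2)) (x u v p q w : X) :
    ⟪x - u - s • u, u - p⟫ + ⟪(2 : ℝ) • u - v - x - s • v, v - q⟫
      ≤ (‖x - w‖ ^ 2 - ‖x + θ • (v - u) - w‖ ^ 2) / (2 * θ)
        + ‖x - w‖ * ‖p - q‖ + θ / 2 * ‖p - q‖ ^ 2
        + (⟪w - p - s • p + θ • (p - q), u - p⟫
          + ⟪(2 : ℝ) • p - w - q - s • q - θ • (p - q), v - q⟫) := by
  have h1 : 0 ≤ s * ⟪(u - p) + (v - q), (u - p) + (v - q)⟫ :=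
    mul_nonneg hs real_inner_self_nonneg
  have h2 : 0 ≤ (2 * (1 + s / 2) - θ) * ⟪(u - v) - (p - q), (u - v) - (p - q)⟫ :=
    mul_nonneg (by linarith) real_inner_self_nonneg
  have h3 : (‖x - w‖ ^ 2 - ‖x + θ • (v - u) - w‖ ^ 2) / (2 * θ)
      = ⟪x - w, u - v⟫ - θ / 2 * ⟪u - v, u - v⟫ := by
    have : x + θ • (v - u) - w = (x - w) - θ • (u - v) := by module
    rw [this, norm_sub_sq_real (x - w), real_inner_smul_right, norm_smul, mul_pow,
      real_inner_self_eq_norm_sq, Real.norm_eq_abs, sq_abs]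
    field_simp
    ring
  have h4 : -⟪x - w, p - q⟫ ≤ ‖x - w‖ * ‖p - q‖ :=
    (neg_le_abs _).trans (abs_real_inner_le_norm _ _)
  rw [h3, ← real_inner_self_eq_norm_sq (p - q)]
  refine le_trans ?_ (add_le_add_left (add_le_add_left (add_le_add_right h4 _) _) _)
  clear h3 h4
  simp only [inner_sub_left, inner_sub_right, inner_add_left, inner_add_right,
      real_inner_smul_left, real_inner_smul_right] at *
  rw [real_inner_comm v u, real_inner_comm p u, real_inner_comm q u, real_inner_comm p v,
    real_inner_comm q v, real_inner_comm q p] at *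
  linarith

/-- Ergodic convergence rate of the relaxed PR splitting method for
`θ ∈ (0, 2θ₀]`. -/
theorem stmt18 {X : Type*} [NormedAddCommGroup X] [InnerProductSpace ℝ X]
    [FiniteDimensional ℝ X]
    (β : ℝ) (hβ : 0 ≤ β) (A B : X → Set X)
    (hA : MaxStrMono β A) (hB : MaxStrMono β B)
    (hsol : ∃ u : X, ∃ a ∈ A u, ∃ b ∈ B u, a + b = 0)
    (γ θ θ0 θt : ℝ) (hγ : 0 < γ) (hθ0 : θ0 = 1 + γ * β / 2) (hθt : θt = min θ θ0)
    (hθpos : 0 < θ) (hθle : θ ≤ 2 * θ0)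
    (x u v : ℕ → X) (hpr : RPR A B γ θ x u v)
    (a b : ℕ → X)
    (ha : ∀ k, a k = γ⁻¹ • (x (k - 1) - u k))
    (hb : ∀ k, b k = γ⁻¹ • ((2 : ℝ) • u k - v k - x (k - 1)))
    (ub vb ab bb : ℕ → X) (ε1 ε2 : ℕ → ℝ)
    (hub : ∀ k, ub k = (k : ℝ)⁻¹ • ∑ i ∈ Finset.Icc 1 k, u i)
    (hvb : ∀ k, vb k = (k : ℝ)⁻¹ • ∑ i ∈ Finset.Icc 1 k, v i)
    (hab : ∀ k, ab k = (k : ℝ)⁻¹ • ∑ i ∈ Finset.Icc 1 k, a i)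
    (hbb : ∀ k, bb k = (k : ℝ)⁻¹ • ∑ i ∈ Finset.Icc 1 k, b i)
    (hε1 : ∀ k, ε1 k = (k : ℝ)⁻¹ * ∑ i ∈ Finset.Icc 1 k, ⟪a i - β • u i, u i - ub k⟫)
    (hε2 : ∀ k, ε2 k = (k : ℝ)⁻¹ * ∑ i ∈ Finset.Icc 1 k, ⟪b i - β • v i, v i - vb k⟫) :
    ∀ k, 1 ≤ k → ∀ ustar xstar : X,
      (0 : X × X × X) ∈ LC θt γ A B (ustar, ustar, xstar) →
        ab k ∈ epsEnlX A (ε1 k) (ub k)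
        ∧ bb k ∈ epsEnlX B (ε2 k) (vb k)
        ∧ γ * ‖ab k + bb k‖ = ‖ub k - vb k‖
        ∧ ‖ub k - vb k‖ ≤ 2 * ‖x 0 - xstar‖ / (k * θ)
        ∧ ε1 k + ε2 k
            ≤ 3 * (1 + 2 * (1 - θt / θ) ^ 2) * ‖x 0 - xstar‖ ^ 2 / (k * γ * θ) := by
  intro k hk us xs h0
  obtain ⟨as, has, bs, hbs, h⟩ := h0
  simp only [Lmap, Prod.ext_iff, Prod.fst_add, Prod.snd_add, Prod.smul_fst, Prod.smul_snd,
    Prod.fst_zero, Prod.snd_zero] at h has hbs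
  obtain ⟨e1, e2, -⟩ := h
  have has' : γ • as = xs - us := by
    rw [← sub_eq_zero, e1]; module
  have hbs' : γ • bs = us - xs := by
    rw [← sub_eq_zero, e2]; module
  have hg : γ ≠ 0 := hγ.ne'
  have hka : ∀ i, γ • a i = x (i - 1) - u i := fun i => by rw [ha, smul_inv_smul₀ hg]
  have hkb : ∀ i, γ • b i = (2 : ℝ) • u i - v i - x (i - 1) := fun i => by
    rw [hb, smul_inv_smul₀ hg]
  have hau : ∀ i, 1 ≤ i → a i ∈ A (u i) := fun i hi => by
    obtain ⟨w, hw, e⟩ := hpr.resA i hi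
    have e' : γ • w = x (i - 1) - u i := e
    rw [ha, ← e', inv_smul_smul₀ hg]; exact hw
  have hbv : ∀ i, 1 ≤ i → b i ∈ B (v i) := fun i hi => by
    obtain ⟨w, hw, e⟩ := hpr.resB i hi
    have e' : γ • w = (2 : ℝ) • u i - x (i - 1) - v i := e
    rw [hb, sub_right_comm, ← e', inv_smul_smul₀ hg]; exact hw
  have hk0 : (0 : ℝ) < k := by exact_mod_cast hk
  have hs : 0 ≤ γ * β := mul_nonneg hγ.le hβ
  have hle : θ ≤ 2 * (1 + γ * β / 2) := hθ0 ▸ hθle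
  have hstep : ∀ i, x (i + 1) = x i + θ • (v (i + 1) - u (i + 1)) := fun i => by
    simpa using hpr.step (i + 1) (by omega)
  have hfe : ∀ i, ‖x (i + 1) - xs‖ ^ 2 ≤ ‖x i - xs‖ ^ 2 := by
    intro i
    have h1 := hA.1 _ _ _ _ (hau (i + 1) (by omega)) has
    have h2 := hB.1 _ _ _ _ (hbv (i + 1) (by omega)) hbs
    have h1' := mul_le_mul_of_nonneg_left h1 hγ.le
    have h2' := mul_le_mul_of_nonneg_left h2 hγ.le
    rw [← real_inner_smul_left, smul_sub, hka, has', ← mul_assoc] at h1'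
    rw [← real_inner_smul_left, smul_sub, hkb, hbs', ← mul_assoc] at h2'
    simp only [Nat.add_sub_cancel] at h1' h2'
    have := fejer_aux (γ * β) θ hs hθpos hle (x i - xs) (u (i + 1) - us) (v (i + 1) - us)
      (h1'.trans_eq (by congr 1; module)) (h2'.trans_eq (by congr 1; module))
    convert this using 3
    rw [hstep]; module
  have hmono : ∀ i, ‖x i - xs‖ ≤ ‖x 0 - xs‖ := by
    intro i
    induction i with
    | zero => exact le_rfl
    | succ n ih => exact ((pow_le_pow_iff_left₀ (norm_nonneg _) (norm_nonneg _) two_ne_zero).1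
                  (hfe n)).trans ih
  have hu : ∑ i ∈ Finset.Icc 1 k, u i = (k : ℝ) • ub k := by
    rw [hub, smul_inv_smul₀ hk0.ne']
  have hv : ∑ i ∈ Finset.Icc 1 k, v i = (k : ℝ) • vb k := by
    rw [hvb, smul_inv_smul₀ hk0.ne']
  have htel : ∀ n, θ • ∑ i ∈ Finset.Icc 1 n, (u i - v i) = x 0 - x n := by
    intro n
    induction n with
    | zero => simp
    | succ n ih => rw [Finset.sum_Icc_succ_top (by omega), smul_add, ih, hstep]; module
  have hd : (k * θ : ℝ) • (ub k - vb k) = (x 0 - xs) - (x k - xs) := by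
    rw [sub_sub_sub_cancel_right, ← htel k, Finset.sum_sub_distrib, hu, hv]; module
  have hdn : k * θ * ‖ub k - vb k‖ ≤ ‖x 0 - xs‖ + ‖x k - xs‖ := by
    have := norm_sub_le (x 0 - xs) (x k - xs)
    rw [← hd, norm_smul, Real.norm_of_nonneg (by positivity)] at this
    exact this
  refine ⟨enl_aux β hβ A hA.1 k hk a u hau _ _ _ (hub k) (hab k) (hε1 k),
    enl_aux β hβ B hB.1 k hk b v hbv _ _ _ (hvb k) (hbb k) (hε2 k), ?_, ?_, ?_⟩
  · have : γ • (ab k + bb k) = ub k - vb k := by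
      rw [hab, hbb, hub, hvb, ← smul_add, ← smul_sub, ← Finset.sum_add_distrib,
        ← Finset.sum_sub_distrib, smul_comm, Finset.smul_sum]
      congr 1
      refine Finset.sum_congr rfl fun i _ => ?_
      rw [smul_add, hka, hkb]; module
    rw [← this, norm_smul, Real.norm_of_nonneg hγ.le]
  · rw [le_div_iff₀ (by positivity)]
    linarith [hmono k]
  · have hfin : ε1 k + ε2 k ≤ 3 * ‖x 0 - xs‖ ^ 2 / (k * γ * θ) := by
      rcases hk.eq_or_lt with h1 | h1
      · subst h1
        have e1 : ε1 1 = 0 := by rw [hε1, hub]; simp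
        have e2 : ε2 1 = 0 := by rw [hε2, hvb]; simp
        rw [e1, e2, add_zero]; positivity
      have hk2 : (2 : ℝ) ≤ k := by exact_mod_cast h1
      set p := ub k with hp
      set q := vb k with hq
      have hE : k * γ * (ε1 k + ε2 k) = ∑ i ∈ Finset.Icc 1 k,
          (⟪x (i - 1) - u i - (γ * β) • u i, u i - p⟫
            + ⟪(2 : ℝ) • u i - v i - x (i - 1) - (γ * β) • v i, v i - q⟫) := by
        have : k * γ * (ε1 k + ε2 k) = γ * ∑ i ∈ Finset.Icc 1 k,
          (⟪a i - β • u i, u i - p⟫ + ⟪b i - β • v i, v i - q⟫) := by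
          rw [hε1, hε2, Finset.sum_add_distrib, ← hp, ← hq]; field_simp
        rw [this, Finset.mul_sum]
        refine Finset.sum_congr rfl fun i _ => ?_
        rw [mul_add, ← real_inner_smul_left, ← real_inner_smul_left, smul_sub, smul_sub, hka, hkb,
          smul_smul, smul_smul]
      have hsum : k * γ * (ε1 k + ε2 k) ≤ ∑ i ∈ Finset.Icc 1 k,
          ((‖x (i - 1) - xs‖ ^ 2 - ‖x i - xs‖ ^ 2) / (2 * θ)
          + (‖x 0 - xs‖ * ‖p - q‖ + θ / 2 * ‖p - q‖ ^ 2)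
          + (⟪xs - p - (γ * β) • p + θ • (p - q), u i - p⟫
          + ⟪(2 : ℝ) • p - xs - q - (γ * β) • q - θ • (p - q), v i - q⟫)) := by
        rw [hE]
        refine Finset.sum_le_sum fun i hi => ?_
        have h1i := (Finset.mem_Icc.1 hi).1
        have := step_aux (γ * β) θ hs hθpos hle (x (i - 1)) (u i) (v i) p q xs
        rw [← hpr.step i h1i] at this
        have h2 := mul_le_mul_of_nonneg_right (hmono (i - 1)) (norm_nonneg (p - q))
        linarith
      have htel2 : ∀ n, ∑ i ∈ Finset.Icc 1 n, (‖x (i - 1) - xs‖ ^ 2 - ‖x i - xs‖ ^ 2)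
          = ‖x 0 - xs‖ ^ 2 - ‖x n - xs‖ ^ 2 := by
        intro n
        induction n with
        | zero => simp
        | succ n ih => rw [Finset.sum_Icc_succ_top (by omega), ih, Nat.add_sub_cancel]; ring
      have hup : ∑ i ∈ Finset.Icc 1 k, (u i - p) = 0 := by
        rw [Finset.sum_sub_distrib, hu]; simp [← Nat.cast_smul_eq_nsmul ℝ]
      have hvq : ∑ i ∈ Finset.Icc 1 k, (v i - q) = 0 := by
        rw [Finset.sum_sub_distrib, hv]; simp [← Nat.cast_smul_eq_nsmul ℝ]
      rw [Finset.sum_add_distrib, Finset.sum_add_distrib, ← Finset.sum_div, htel2,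
        Finset.sum_const, Finset.sum_add_distrib, ← inner_sum, ← inner_sum, hup, hvq, inner_zero_right,
        inner_zero_right] at hsum
      simp only [Nat.card_Icc, Nat.add_sub_cancel, nsmul_eq_mul] at hsum
      have hr := hmono k
      have hr0 := norm_nonneg (x k - xs)
      have hD0 := norm_nonneg (p - q)
      generalize ‖x k - xs‖ = r at *
      generalize ‖x 0 - xs‖ = R at *
      generalize ‖p - q‖ = D at *
      generalize ε1 k + ε2 k = E at *
      have hm := mul_le_mul_of_nonneg_left hsum hθpos.le
      have e3 : θ * ((R ^ 2 - r ^ 2) / (2 * θ) + k * (R * D + θ / 2 * D ^ 2) + (0 + 0))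
          = (R ^ 2 - r ^ 2) / 2 + R * (k * θ * D) + (k * θ * D) ^ 2 / (2 * k) := by
        field_simp
        ring
      rw [e3] at hm
      have hM0 : 0 ≤ k * θ * D := by positivity
      generalize k * θ * D = M at *
      have h5 : M ^ 2 / (2 * k) ≤ M ^ 2 / 4 := by
        apply div_le_div_of_nonneg_left <;> first | positivity | linarith
      rw [le_div_iff₀ (by positivity)]
      have h6 : M ^ 2 ≤ (R + r) ^ 2 := pow_le_pow_left₀ hM0 hdn 2
      have h7 : R * M ≤ R * (R + r) := mul_le_mul_of_nonneg_left hdn (by linarith)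
      nlinarith [mul_nonneg hr0 (sub_nonneg.2 hr), mul_nonneg (hr0.trans hr) (sub_nonneg.2 hr)]
    refine hfin.trans ?_
    gcongr
    nlinarith [sq_nonneg (1 - θt / θ)]
end

section
/- Let 𝒳 be a finite-dimensional real inner product space, β ≥ 0, A, B : 𝒳 ⇉ 𝒳 maximal β-strongly monotone with (A+B)⁻¹(0) ≠ ∅, γ > 0, θ₀ := 1 + γβ/2, θ̃ := min{θ, θ₀}, and assume θ ∈ (0, 2θ₀]. Let {(u_k, v_k, x_k)} be generated by the relaxed PR splitting method from x₀ and set x̃_k := x_{k−1} + θ̃(v_k − u_k). Then the sequences {(u_k, v_k, x_k)} and {(u_k, v_k, x̃_k)} are bounded. -/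
open RealInnerProductSpace Filter Pointwise

lemma mono_step {X : Type*} [NormedAddCommGroup X] [InnerProductSpace ℝ X]
    {β γ : ℝ} {T : X → Set X} (hT : StrMono β T) (hγ : 0 < γ) {p a u w : X}
    (ha : a ∈ T p) (hw : w ∈ γ • T u) :
    γ * β * ‖u - p‖ ^ 2 ≤ ⟪w - γ • a, u - p⟫ := by
  obtain ⟨c, hc, rfl⟩ := hw
  have h := hT u p c a hc ha
  have h2 := mul_le_mul_of_nonneg_left h hγ.le
  simp only [← smul_sub, real_inner_smul_left]
  linarith

lemma key_step {X : Type*} [NormedAddCommGroup X] [InnerProductSpace ℝ X]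
    {s θ : ℝ} (hs : 0 ≤ s) (hθ : 0 < θ) (hθ2 : θ ≤ 2 * (1 + s / 2)) {U V Y : X}
    (h1 : s * ‖U‖ ^ 2 ≤ ⟪Y - U, U⟫) (h2 : s * ‖V‖ ^ 2 ≤ ⟪(2 : ℝ) • U - Y - V, V⟫) :
    ‖U‖ ≤ ‖Y‖ ∧ ‖V‖ ≤ 3 * ‖Y‖ ∧ ‖Y + θ • (V - U)‖ ≤ ‖Y‖ := by
  have aux : ∀ Z W : X, s * ‖W‖ ^ 2 ≤ ⟪Z - W, W⟫ → ‖W‖ ≤ ‖Z‖ := by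
    intro Z W h
    rw [inner_sub_left, real_inner_self_eq_norm_sq] at h
    have h3 := real_inner_le_norm Z W
    have h4 : 0 ≤ s * ‖W‖ ^ 2 := by positivity
    by_contra! hlt
    have : 0 < ‖W‖ := lt_of_le_of_lt (norm_nonneg _) hlt
    nlinarith
  have hU := aux _ _ h1
  have hV := aux _ _ h2
  refine ⟨hU, ?_, ?_⟩
  · have := norm_sub_le ((2 : ℝ) • U) Y
    rw [norm_smul] at this
    norm_num at this
    linarith
  · have e1 : ‖Y + θ • (V - U)‖ ^ 2
        = ‖Y‖ ^ 2 + 2 * θ * ⟪Y, V - U⟫ + θ ^ 2 * ‖V - U‖ ^ 2 := by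
      rw [norm_add_sq_real, norm_smul, real_inner_smul_right, mul_pow, Real.norm_eq_abs, sq_abs]
      ring
    have e2 : ‖V - U‖ ^ 2 = ‖V‖ ^ 2 - 2 * ⟪V, U⟫ + ‖U‖ ^ 2 := norm_sub_sq_real V U
    have e3 : ‖V + U‖ ^ 2 = ‖V‖ ^ 2 + 2 * ⟪V, U⟫ + ‖U‖ ^ 2 := norm_add_sq_real V U
    simp only [inner_sub_left, real_inner_smul_left, real_inner_self_eq_norm_sq] at h1 h2
    rw [real_inner_comm V U] at h2
    have e4 : ⟪Y, V - U⟫ ≤ -(1 + s / 2) * ‖V - U‖ ^ 2 := by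
      rw [inner_sub_right]
      have : 0 ≤ s * ‖V + U‖ ^ 2 := by positivity
      rw [e3] at this
      rw [e2]
      linarith
    have e5 := mul_le_mul_of_nonneg_left e4 hθ.le
    have e6 : 0 ≤ θ * (2 * (1 + s / 2) - θ) * ‖V - U‖ ^ 2 :=
      mul_nonneg (mul_nonneg hθ.le (by linarith)) (sq_nonneg _)
    refine (sq_le_sq₀ (norm_nonneg _) (norm_nonneg _)).1 ?_
    rw [e1]
    linarith

/-- Boundedness of the sequences `{(u_k, v_k, x_k)}` and
`{(u_k, v_k, x̃_k)}` generated by the relaxed PR splitting method for `θ ∈ (0, 2θ₀]`. -/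
theorem stmt19 {X : Type*} [NormedAddCommGroup X] [InnerProductSpace ℝ X]
    [FiniteDimensional ℝ X]
    (β : ℝ) (hβ : 0 ≤ β) (A B : X → Set X)
    (hA : MaxStrMono β A) (hB : MaxStrMono β B)
    (hsol : ∃ u : X, ∃ a ∈ A u, ∃ b ∈ B u, a + b = 0)
    (γ θ θ0 θt : ℝ) (hγ : 0 < γ) (hθ0 : θ0 = 1 + γ * β / 2) (hθt : θt = min θ θ0)
    (hθpos : 0 < θ) (hθle : θ ≤ 2 * θ0)
    (x u v : ℕ → X) (hpr : RPR A B γ θ x u v)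
    (xt : ℕ → X) (hxt : ∀ k, xt k = x (k - 1) + θt • (v k - u k)) :
    ∃ R : ℝ, ∀ k, 1 ≤ k → ‖u k‖ ≤ R ∧ ‖v k‖ ≤ R ∧ ‖x k‖ ≤ R ∧ ‖xt k‖ ≤ R := by
  obtain ⟨p, a, ha, b, hb, hab⟩ := hsol
  have hba : b = -a := by rw [eq_neg_iff_add_eq_zero, add_comm]; exact hab
  subst hba
  have hs : 0 ≤ γ * β := mul_nonneg hγ.le hβ
  have step : ∀ n, ‖u (n + 1) - p‖ ≤ ‖x n - (p + γ • a)‖ ∧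
      ‖v (n + 1) - p‖ ≤ 3 * ‖x n - (p + γ • a)‖ ∧
      ‖x (n + 1) - (p + γ • a)‖ ≤ ‖x n - (p + γ • a)‖ := by
    intro n
    have hA1 := mono_step hA.1 hγ ha (hpr.resA (n + 1) (by omega))
    have hB1 := mono_step hB.1 hγ hb (hpr.resB (n + 1) (by omega))
    have hx := hpr.step (n + 1) (by omega)
    simp only [Nat.add_sub_cancel] at hA1 hB1 hx
    have q1 : x n - u (n + 1) - γ • a = (x n - (p + γ • a)) - (u (n + 1) - p) := by abel
    have q2 : (2 : ℝ) • u (n + 1) - x n - v (n + 1) - γ • (-a)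
        = (2 : ℝ) • (u (n + 1) - p) - (x n - (p + γ • a)) - (v (n + 1) - p) := by module
    rw [q1] at hA1
    rw [q2] at hB1
    obtain ⟨k1, k2, k3⟩ := key_step hs hθpos (by rw [← hθ0]; exact hθle) hA1 hB1
    refine ⟨k1, k2, ?_⟩
    have q3 : x (n + 1) - (p + γ • a)
        = x n - (p + γ • a) + θ • (v (n + 1) - p - (u (n + 1) - p)) := by
      rw [hx]; module
    rw [q3]; exact k3
  set M := ‖x 0 - (p + γ • a)‖ with hM
  have hM0 : 0 ≤ M := norm_nonneg _
  have hb : ∀ n, ‖x n - (p + γ • a)‖ ≤ M := by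
    intro n
    induction n with
    | zero => exact le_refl _
    | succ n ih => exact (step n).2.2.trans ih
  have tri : ∀ y z : X, ‖y‖ ≤ ‖z‖ + ‖y - z‖ := by
    intro y z
    have := norm_add_le z (y - z)
    simpa using this
  have hT : 0 ≤ |θt| * (4 * M) := by positivity
  refine ⟨‖p‖ + ‖p + γ • a‖ + 3 * M + |θt| * (4 * M), ?_⟩
  intro k hk
  obtain ⟨n, rfl⟩ : ∃ n, k = n + 1 := ⟨k - 1, by omega⟩
  obtain ⟨s1, s2, s3⟩ := step n
  have hn := hb n
  have n1 := norm_nonneg p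
  have n2 := norm_nonneg (p + γ • a)
  refine ⟨?_, ?_, ?_, ?_⟩
  · have := tri (u (n + 1)) p
    linarith
  · have := tri (v (n + 1)) p
    linarith
  · have := tri (x (n + 1)) (p + γ • a)
    linarith
  · have t1 := tri (x n) (p + γ • a)
    have t2 := norm_add_le (x n) (θt • (v (n + 1) - u (n + 1)))
    have t3 : ‖v (n + 1) - u (n + 1)‖ ≤ 4 * M := by
      have := norm_sub_le (v (n + 1) - p) (u (n + 1) - p)
      rw [sub_sub_sub_cancel_right] at this
      linarith
    rw [norm_smul, Real.norm_eq_abs] at t2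
    have t4 := mul_le_mul_of_nonneg_left t3 (abs_nonneg θt)
    rw [hxt, Nat.add_sub_cancel]
    linarith
end
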